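/- arXiv:1404.7056 — 3 statements merged into one kernel-verified Lean document; each statement's English description precedes it below -/
import Mathlib

section
/- For any sequence of sets E_1, E_2, … ⊆ P one has C̃_{X,r}(⋃_{j=1}^∞ E_j)^r ≤ Σ_{j=1}^∞ C̃_{X,r}(E_j)^r; that is, the set function C̃_{X,r}(·)^r is countably subadditive. -/
/-!
Near-optimal pairs `(u j, g j)` for the sets `E j` are combined into `(⨆ j, v j, ⨆ j, g j)`, where
`v j` is `u j` truncated to `[0, 1]`. Truncation is a contraction, so it keeps `g j` as an upper
gradient, and it prevents the supremum from taking infinite values, at which the convention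
`|∞ - ∞| = ∞` would break the upper gradient inequality. Suprema are dominated by sums, so it
remains to see that an `r`-norm is countably `r`-subadditive on nonnegative functions, although the
Riesz–Fischer inequality carries the growing weights `cc ^ (n + 1)`. If `∑ ‖f j‖ ^ r < ∞`, cut a
tail of `∑ f j` into finite blocks. By the `r`-triangle inequality the norm of the `k`-th block is
controlled by a tail of the convergent series, so the cutting points can be chosen to make these
norms decay faster than the weights grow; hence the tails of `∑ f j` tend to zero in norm.
-/

open MeasureTheory Filter Set Topology Metric ENNReal

noncomputable section

/-- A (non-constant, rectifiable) curve in `P`, parametrized by arc length. -/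
structure Curve (P : Type*) [PseudoMetricSpace P] where
  len : ℝ
  len_pos : 0 < len
  toFun : ℝ → P
  lip : LipschitzOnWith 1 toFun (Set.Icc 0 len)

variable {P : Type*}

/-- The curve integral `∫_γ ρ ds`. -/
def curveLint [PseudoMetricSpace P] (γ : Curve P) (ρ : P → ℝ≥0∞) : ℝ≥0∞ :=
  ∫⁻ t in Set.Icc (0 : ℝ) γ.len, ρ (γ.toFun t)

/-- `g` is an upper gradient of `u`. -/
def IsUpperGradient [PseudoMetricSpace P] [MeasurableSpace P]
    (u : P → EReal) (g : P → ℝ≥0∞) : Prop :=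
  Measurable g ∧
    ∀ γ : Curve P, (u (γ.toFun 0) - u (γ.toFun γ.len)).abs ≤ curveLint γ g

/-- A quasi-Banach function lattice over `(P, μ)` with continuous quasi-norm. -/
structure QBFL (P : Type*) [MeasurableSpace P] (μ : MeasureTheory.Measure P) where
  nrm : (P → EReal) → ℝ≥0∞
  cc : ℝ≥0∞
  one_le_cc : 1 ≤ cc
  cc_lt_top : cc < ⊤
  nrm_eq_zero_iff : ∀ u : P → EReal, Measurable u → (nrm u = 0 ↔ u =ᵐ[μ] 0)
  nrm_smul : ∀ (a : ℝ) (u : P → EReal),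
    nrm (fun x => (a : EReal) * u x) = ENNReal.ofReal |a| * nrm u
  nrm_triangle : ∀ u v : P → EReal,
    nrm (fun x => u x + v x) ≤ cc * (nrm u + nrm v)
  nrm_mono : ∀ u v : P → EReal, (∀ᵐ x ∂μ, (u x).abs ≤ (v x).abs) → nrm u ≤ nrm v
  nrm_rieszFischer : ∀ f : ℕ → P → EReal, (∀ n, ∀ᵐ x ∂μ, 0 ≤ f n x) →
    nrm (fun x => ∑' n, f n x) ≤ ∑' n, cc ^ (n + 1) * nrm (f n)
  nrm_continuous : ∀ (f : ℕ → P → EReal) (u : P → EReal),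
    Tendsto (fun n => nrm fun x => f n x - u x) atTop (𝓝 0) →
    Tendsto (fun n => nrm (f n)) atTop (𝓝 (nrm u))

variable [MetricSpace P] [MeasurableSpace P] {μ : MeasureTheory.Measure P}

/-- The quasi-norm applied to a `ℝ≥0∞`-valued function. -/
def QBFL.nrmE (X : QBFL P μ) (g : P → ℝ≥0∞) : ℝ≥0∞ :=
  X.nrm fun x => (g x : EReal)

/-- The Newtonian quasi-seminorm `‖u‖_{N¹X}`. -/
def QBFL.newt (X : QBFL P μ) (u : P → EReal) : ℝ≥0∞ :=
  X.nrm u + ⨅ g ∈ {g : P → ℝ≥0∞ | IsUpperGradient u g}, X.nrmE g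

/-- Membership in the Newtonian space `N¹X`. -/
def QBFL.memN1 (X : QBFL P μ) (u : P → EReal) : Prop :=
  Measurable u ∧ X.newt u < ⊤

/-- The Sobolev capacity `C_X`. -/
def QBFL.cap (X : QBFL P μ) (E : Set P) : ℝ≥0∞ :=
  ⨅ u ∈ {u : P → EReal | X.memN1 u ∧ ∀ x ∈ E, 1 ≤ u x}, X.newt u


/-- The Sobolev capacity `C̃_{X,r}`. -/
def QBFL.capR (X : QBFL P μ) (r : ℝ) (E : Set P) : ℝ≥0∞ :=
  ⨅ q ∈ {q : (P → EReal) × (P → ℝ≥0∞) |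
      Measurable q.1 ∧ (∀ x ∈ E, 1 ≤ q.1 x) ∧ IsUpperGradient q.1 q.2},
    (X.nrm q.1 ^ r + X.nrmE q.2 ^ r) ^ (1 / r)

/-- `‖·‖_X` is an `r`-norm. -/
def QBFL.IsRNorm (X : QBFL P μ) (r : ℝ) : Prop :=
  ∀ u v : P → EReal, X.nrm (fun x => u x + v x) ^ r ≤ X.nrm u ^ r + X.nrm v ^ r

lemma tsum_sum_Ico_eq_tsum_nat_add (a : ℕ → ℝ≥0∞) {φ : ℕ → ℕ} (hφ : StrictMono φ) :
    ∑' k, ∑ j ∈ Finset.Ico (φ k) (φ (k + 1)), a j = ∑' j, a (j + φ 0) := by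
  have telescope (N : ℕ) : ∑ k ∈ Finset.range N, ∑ j ∈ Finset.Ico (φ k) (φ (k + 1)), a j =
      ∑ j ∈ Finset.range (φ N - φ 0), a (j + φ 0) := by
    simp only [add_comm _ (φ 0), ← Finset.sum_Ico_eq_sum_range]
    induction N with
    | zero => simp
    | succ N ih =>
      rw [Finset.sum_range_succ, ih, Finset.sum_Ico_consecutive _ (hφ.monotone N.zero_le)
        (hφ.monotone N.le_succ)]
  refine tendsto_nhds_unique (ENNReal.tendsto_nat_tsum _) ?_
  simp only [telescope]
  exact (ENNReal.tendsto_nat_tsum fun j => a (j + φ 0)).comp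
    ((tendsto_sub_atTop_nat (φ 0)).comp hφ.tendsto_atTop)

lemma exists_strictMono_sum_Ico_le {a δ : ℕ → ℝ≥0∞} (ha : ∑' j, a j ≠ ⊤) (hδ : ∀ k, δ k ≠ 0) :
    ∃ φ : ℕ → ℕ, StrictMono φ ∧ ∀ k, ∑ j ∈ Finset.Ico (φ k) (φ (k + 1)), a j ≤ δ k := by
  have htail (k : ℕ) : ∀ᶠ n in atTop, ∑' j, a (j + n) < δ k :=
    (ENNReal.tendsto_sum_nat_add a ha).eventually_lt_const (pos_iff_ne_zero.2 (hδ k))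
  obtain ⟨φ, hφ, hφδ⟩ := extraction_forall_of_eventually htail
  refine ⟨φ, hφ, fun k => le_trans ?_ (hφδ k).le⟩
  simp only [Finset.sum_Ico_eq_sum_range, add_comm (φ k)]
  exact ENNReal.sum_le_tsum _

lemma ereal_coe_ennreal_tsum {ι : Type*} (a : ι → ℝ≥0∞) :
    ((∑' i, a i : ℝ≥0∞) : EReal) = ∑' i, (a i : EReal) :=
  ENNReal.summable.map_tsum
    (⟨⟨(↑), EReal.coe_ennreal_zero⟩, EReal.coe_ennreal_add⟩ : ℝ≥0∞ →+ EReal)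
    continuous_coe_ennreal_ereal

lemma ereal_abs_coe_ennreal (a : ℝ≥0∞) : (a : EReal).abs = a := by
  induction a with
  | top => rfl
  | coe a => exact (EReal.abs_def a).trans (by simp)

lemma ereal_abs_sub_comm (a b : EReal) : (a - b).abs = (b - a).abs := by
  induction a <;> induction b <;> try rfl
  rw [← EReal.coe_sub, ← EReal.coe_sub, EReal.abs_def, EReal.abs_def, abs_sub_comm]

lemma ereal_toENNReal_le_abs (a : EReal) : a.toENNReal ≤ a.abs := by
  induction a with
  | bot => simp
  | top => simp
  | coe a => exact ENNReal.ofReal_le_ofReal (le_abs_self a)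

lemma ereal_abs_coe_sub_coe_le_iff {a b c : ℝ≥0∞} (ha : a ≠ ⊤) (hb : b ≠ ⊤) :
    ((a : EReal) - b).abs ≤ c ↔ a ≤ b + c ∧ b ≤ a + c := by
  induction c with
  | top => simp
  | coe c =>
    lift a to NNReal using ha
    lift b to NNReal using hb
    change ENNReal.ofReal |(a : ℝ) - b| ≤ c ↔ _
    rw [ENNReal.ofReal_le_coe, abs_sub_le_iff, sub_le_iff_le_add', sub_le_iff_le_add']
    norm_cast

/-- Truncation of an extended real number to `[0, 1]`, used to replace an admissible function by a
bounded one. -/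
def unitTrunc (a : EReal) : ℝ≥0∞ := min 1 a.toENNReal

lemma unitTrunc_le_one (a : EReal) : unitTrunc a ≤ 1 := min_le_left _ _

lemma unitTrunc_le_abs (a : EReal) : unitTrunc a ≤ a.abs :=
  (min_le_right _ _).trans (ereal_toENNReal_le_abs a)

lemma one_le_unitTrunc {a : EReal} (ha : 1 ≤ a) : 1 ≤ unitTrunc a :=
  le_min le_rfl (EReal.toENNReal_coe.ge.trans (EReal.toENNReal_le_toENNReal ha))

lemma measurable_unitTrunc : Measurable unitTrunc :=
  measurable_const.min measurable_id.ereal_toENNReal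

lemma unitTrunc_le_add_abs_sub (a b : EReal) : unitTrunc a ≤ unitTrunc b + (a - b).abs := by
  unfold unitTrunc
  induction a with
  | bot => simp
  | top => induction b <;> simp
  | coe a =>
    induction b with
    | bot => simp
    | top => simp
    | coe b =>
      have hab : ENNReal.ofReal a ≤ ENNReal.ofReal b + ENNReal.ofReal |a - b| :=
        (ENNReal.ofReal_le_ofReal (by linarith [le_abs_self (a - b)])).trans ENNReal.ofReal_add_le
      rw [← min_add_add_right]
      exact min_le_min le_self_add hab

lemma abs_unitTrunc_sub_le (a b : EReal) :
    ((unitTrunc a : EReal) - unitTrunc b).abs ≤ (a - b).abs := by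
  have hfin (c : EReal) : unitTrunc c ≠ ⊤ := ne_top_of_le_ne_top one_ne_top (unitTrunc_le_one c)
  refine (ereal_abs_coe_sub_coe_le_iff (hfin a) (hfin b)).2 ⟨unitTrunc_le_add_abs_sub a b, ?_⟩
  rw [ereal_abs_sub_comm]
  exact unitTrunc_le_add_abs_sub b a

namespace IsUpperGradient

variable {Y : Type*} [PseudoMetricSpace Y] [MeasurableSpace Y]

protected lemma unitTrunc {u : Y → EReal} {g : Y → ℝ≥0∞} (h : IsUpperGradient u g) :
    IsUpperGradient (fun x => (unitTrunc (u x) : EReal)) g :=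
  ⟨h.1, fun γ => (abs_unitTrunc_sub_le _ _).trans (h.2 γ)⟩

protected lemma iSup {ι : Type*} [Countable ι] {v g : ι → Y → ℝ≥0∞}
    (hfin : ∀ x, ⨆ i, v i x ≠ ⊤) (h : ∀ i, IsUpperGradient (fun x => (v i x : EReal)) (g i)) :
    IsUpperGradient (fun x => ((⨆ i, v i x : ℝ≥0∞) : EReal)) (fun x => ⨆ i, g i x) := by
  refine ⟨.iSup fun i => (h i).1, fun γ => ?_⟩
  have hv (i : ι) (x : Y) : v i x ≠ ⊤ := ne_top_of_le_ne_top (hfin x) (le_iSup (v · x) i)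
  have hg (i : ι) : curveLint γ (g i) ≤ curveLint γ (fun x => ⨆ i, g i x) :=
    lintegral_mono fun t => le_iSup (g · (γ.toFun t)) i
  have hγ (i : ι) :=
    (ereal_abs_coe_sub_coe_le_iff (hv i _) (hv i _)).1 (((h i).2 γ).trans (hg i))
  refine (ereal_abs_coe_sub_coe_le_iff (hfin _) (hfin _)).2 ⟨?_, ?_⟩
  · exact iSup_le fun i => (hγ i).1.trans (by gcongr; exact le_iSup (v · _) i)
  · exact iSup_le fun i => (hγ i).2.trans (by gcongr; exact le_iSup (v · _) i)

end IsUpperGradient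

namespace QBFL

variable {Ω : Type*} [MeasurableSpace Ω] {ν : Measure Ω} (X : QBFL Ω ν)

lemma nrmE_mono {f g : Ω → ℝ≥0∞} (h : ∀ x, f x ≤ g x) : X.nrmE f ≤ X.nrmE g :=
  X.nrm_mono _ _ <| .of_forall fun x => by simpa only [ereal_abs_coe_ennreal] using h x

lemma nrmE_zero : X.nrmE (fun _ => 0) = 0 :=
  (X.nrm_eq_zero_iff _ measurable_const).2 <| .of_forall fun _ => rfl

lemma nrmE_unitTrunc_le (u : Ω → EReal) : X.nrmE (fun x => unitTrunc (u x)) ≤ X.nrm u :=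
  X.nrm_mono _ _ <| .of_forall fun x => by
    simpa only [ereal_abs_coe_ennreal] using unitTrunc_le_abs (u x)

lemma nrmE_tsum_le (f : ℕ → Ω → ℝ≥0∞) :
    X.nrmE (fun x => ∑' n, f n x) ≤ ∑' n, X.cc ^ (n + 1) * X.nrmE (f n) := by
  simpa only [nrmE, ereal_coe_ennreal_tsum] using X.nrm_rieszFischer (fun n x => f n x)
    fun n => .of_forall fun x => EReal.coe_ennreal_nonneg _

variable {X} {r : ℝ}

lemma IsRNorm.nrmE_add_rpow_le (hX : X.IsRNorm r) (f g : Ω → ℝ≥0∞) :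
    X.nrmE (fun x => f x + g x) ^ r ≤ X.nrmE f ^ r + X.nrmE g ^ r := by
  simpa only [nrmE, EReal.coe_ennreal_add] using hX (fun x => f x) (fun x => g x)

lemma IsRNorm.nrmE_sum_rpow_le (hX : X.IsRNorm r) (hr : 0 < r) {ι : Type*} (s : Finset ι)
    (f : ι → Ω → ℝ≥0∞) :
    X.nrmE (fun x => ∑ i ∈ s, f i x) ^ r ≤ ∑ i ∈ s, X.nrmE (f i) ^ r := by
  classical
  induction s using Finset.induction_on with
  | empty => simp [X.nrmE_zero, hr]
  | insert i s hi ih =>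
    simp only [Finset.sum_insert hi]
    exact (hX.nrmE_add_rpow_le _ _).trans (by gcongr)

lemma IsRNorm.exists_nrmE_tsum_nat_add_le (hX : X.IsRNorm r) (hr : 0 < r) {f : ℕ → Ω → ℝ≥0∞}
    (hf : ∑' j, X.nrmE (f j) ^ r ≠ ⊤) {ε : ℝ≥0∞} (hε : ε ≠ 0) :
    ∃ n, X.nrmE (fun x => ∑' j, f (j + n) x) ≤ ε := by
  obtain ⟨e, he_pos, he_sum⟩ := ENNReal.exists_pos_sum_of_countable' hε ℕ
  -- The size allowed for the `k`-th block compensates the weight `cc ^ (k + 1)`.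
  let δ (k : ℕ) : ℝ≥0∞ := e k / X.cc ^ (k + 1)
  have hδ (k : ℕ) : 0 < δ k := ENNReal.div_pos (he_pos k).ne' (pow_ne_top X.cc_lt_top.ne)
  obtain ⟨φ, hφ, hφδ⟩ :=
    exists_strictMono_sum_Ico_le hf fun k => (ENNReal.rpow_pos_of_nonneg (hδ k) hr.le).ne'
  have hblock (k : ℕ) : X.nrmE (fun x => ∑ j ∈ Finset.Ico (φ k) (φ (k + 1)), f j x) ≤ δ k :=
    (ENNReal.rpow_le_rpow_iff hr).1 <| (hX.nrmE_sum_rpow_le hr _ f).trans (hφδ k)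
  refine ⟨φ 0, ?_⟩
  calc X.nrmE (fun x => ∑' j, f (j + φ 0) x)
      = X.nrmE (fun x => ∑' k, ∑ j ∈ Finset.Ico (φ k) (φ (k + 1)), f j x) := by
        simp only [tsum_sum_Ico_eq_tsum_nat_add _ hφ]
    _ ≤ ∑' k, X.cc ^ (k + 1) * δ k :=
        (X.nrmE_tsum_le _).trans <| by gcongr with k; exact hblock k
    _ ≤ ∑' k, e k := by gcongr; exact ENNReal.mul_div_le
    _ ≤ ε := he_sum.le

lemma IsRNorm.nrmE_tsum_nat_rpow_le (hX : X.IsRNorm r) (hr : 0 < r) (f : ℕ → Ω → ℝ≥0∞) :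
    X.nrmE (fun x => ∑' j, f j x) ^ r ≤ ∑' j, X.nrmE (f j) ^ r := by
  refine ENNReal.le_of_forall_pos_le_add fun ε hε hfin => ?_
  have hε' : (ε : ℝ≥0∞) ^ r⁻¹ ≠ 0 := by simp [hε.ne']
  obtain ⟨n, hn⟩ := hX.exists_nrmE_tsum_nat_add_le hr hfin.ne hε'
  calc X.nrmE (fun x => ∑' j, f j x) ^ r
      = X.nrmE (fun x => ∑ j ∈ Finset.range n, f j x + ∑' j, f (j + n) x) ^ r := by
        simp only [ENNReal.summable.sum_add_tsum_nat_add']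
    _ ≤ X.nrmE (fun x => ∑ j ∈ Finset.range n, f j x) ^ r
          + X.nrmE (fun x => ∑' j, f (j + n) x) ^ r := hX.nrmE_add_rpow_le _ _
    _ ≤ ∑' j, X.nrmE (f j) ^ r + ε := by
        gcongr
        · exact (hX.nrmE_sum_rpow_le hr _ f).trans (ENNReal.sum_le_tsum _)
        · exact (ENNReal.le_rpow_inv_iff hr).1 hn

lemma IsRNorm.nrmE_tsum_rpow_le (hX : X.IsRNorm r) (hr : 0 < r) {ι : Type*} [Countable ι]
    (f : ι → Ω → ℝ≥0∞) :
    X.nrmE (fun x => ∑' i, f i x) ^ r ≤ ∑' i, X.nrmE (f i) ^ r := by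
  cases finite_or_infinite ι with
  | inl _ =>
    have := Fintype.ofFinite ι
    simpa only [tsum_fintype] using hX.nrmE_sum_rpow_le hr Finset.univ f
  | inr _ =>
    obtain ⟨e⟩ : Nonempty (ℕ ≃ ι) := nonempty_equiv_of_countable
    have hfe (x : Ω) : ∑' n, f (e n) x = ∑' i, f i x := e.tsum_eq (f · x)
    rw [← e.tsum_eq fun i => X.nrmE (f i) ^ r]
    simpa only [hfe] using hX.nrmE_tsum_nat_rpow_le hr fun n => f (e n)

lemma IsRNorm.nrmE_iSup_rpow_le (hX : X.IsRNorm r) (hr : 0 < r) {ι : Type*} [Countable ι]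
    (f : ι → Ω → ℝ≥0∞) :
    X.nrmE (fun x => ⨆ i, f i x) ^ r ≤ ∑' i, X.nrmE (f i) ^ r :=
  (ENNReal.rpow_le_rpow (X.nrmE_mono fun _ => iSup_le ENNReal.le_tsum) hr.le).trans
    (hX.nrmE_tsum_rpow_le hr f)

end QBFL

/-- Admissibility of a pair for the capacity of `E`: the function is at least `1` on `E` and has the
second component as an upper gradient. This is the index set of the infimum in `QBFL.capR`. -/
structure IsCapAdmissible {Y : Type*} [PseudoMetricSpace Y] [MeasurableSpace Y] (E : Set Y)
    (u : Y → EReal) (g : Y → ℝ≥0∞) : Prop where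
  measurable : Measurable u
  one_le : ∀ x ∈ E, 1 ≤ u x
  isUpperGradient : IsUpperGradient u g

lemma IsCapAdmissible.iUnion {Y : Type*} [PseudoMetricSpace Y] [MeasurableSpace Y] {ι : Type*}
    [Countable ι] {E : ι → Set Y} {u : ι → Y → EReal} {g : ι → Y → ℝ≥0∞}
    (h : ∀ i, IsCapAdmissible (E i) (u i) (g i)) :
    IsCapAdmissible (⋃ i, E i) (fun x => ((⨆ i, unitTrunc (u i x) : ℝ≥0∞) : EReal))
      (fun x => ⨆ i, g i x) where
  measurable :=
    (Measurable.iSup fun i => measurable_unitTrunc.comp (h i).measurable).coe_ereal_ennreal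
  one_le x hx := by
    obtain ⟨i, hi⟩ := mem_iUnion.1 hx
    exact_mod_cast (one_le_unitTrunc ((h i).one_le x hi)).trans
      (le_iSup (fun i => unitTrunc (u i x)) i)
  isUpperGradient := .iSup
    (fun _ => ne_top_of_le_ne_top one_ne_top (iSup_le fun _ => unitTrunc_le_one _))
    fun i => (h i).isUpperGradient.unitTrunc

lemma QBFL.capR_rpow_eq_iInf (X : QBFL P μ) {r : ℝ} (hr : 0 < r) (E : Set P) :
    X.capR r E ^ r = ⨅ (u) (g) (_ : IsCapAdmissible E u g), (X.nrm u ^ r + X.nrmE g ^ r) := by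
  have hset : {q : (P → EReal) × (P → ℝ≥0∞) |
      Measurable q.1 ∧ (∀ x ∈ E, 1 ≤ q.1 x) ∧ IsUpperGradient q.1 q.2} =
      {q | IsCapAdmissible E q.1 q.2} := by
    ext q
    exact ⟨fun ⟨hm, h1, hg⟩ => ⟨hm, h1, hg⟩, fun h => ⟨h.1, h.2, h.3⟩⟩
  change ENNReal.orderIsoRpow r hr (X.capR r E) = _
  simp only [capR, hset, OrderIso.map_iInf, ENNReal.orderIsoRpow_apply, one_div,
    ENNReal.rpow_inv_rpow hr.ne', iInf_prod, mem_ofPred_eq]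

lemma QBFL.exists_isCapAdmissible_lt {X : QBFL P μ} {r : ℝ} (hr : 0 < r) {E : Set P} {c : ℝ≥0∞}
    (hc : X.capR r E ^ r < c) :
    ∃ u g, IsCapAdmissible E u g ∧ X.nrm u ^ r + X.nrmE g ^ r < c := by
  simpa only [X.capR_rpow_eq_iInf hr, iInf_lt_iff, exists_prop] using hc

lemma IsCapAdmissible.capR_rpow_le (X : QBFL P μ) {r : ℝ} (hr : 0 < r) {E : Set P}
    {u : P → EReal} {g : P → ℝ≥0∞} (h : IsCapAdmissible E u g) :
    X.capR r E ^ r ≤ X.nrm u ^ r + X.nrmE g ^ r :=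
  (X.capR_rpow_eq_iInf hr E).trans_le (iInf₂_le_of_le u g (iInf_le _ h))

theorem capR_rpow_countably_subadditive_general (X : QBFL P μ) {r : ℝ} (hr : 0 < r)
    (hX : X.IsRNorm r) {ι : Type*} [Countable ι] (E : ι → Set P) :
    X.capR r (⋃ i, E i) ^ r ≤ ∑' i, X.capR r (E i) ^ r := by
  refine ENNReal.le_of_forall_pos_le_add fun ε hε hfin => ?_
  obtain ⟨e, he_pos, he_sum⟩ :=
    ENNReal.exists_pos_sum_of_countable' (ENNReal.coe_ne_zero.2 hε.ne') ι
  have hlt (i : ι) : X.capR r (E i) ^ r < X.capR r (E i) ^ r + e i :=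
    ENNReal.lt_add_right (ENNReal.ne_top_of_tsum_ne_top hfin.ne i) (he_pos i).ne'
  choose u g hadm hug using fun i => QBFL.exists_isCapAdmissible_lt hr (hlt i)
  calc X.capR r (⋃ i, E i) ^ r
      ≤ X.nrmE (fun x => ⨆ i, unitTrunc (u i x)) ^ r + X.nrmE (fun x => ⨆ i, g i x) ^ r :=
        (IsCapAdmissible.iUnion hadm).capR_rpow_le X hr
    _ ≤ ∑' i, X.nrmE (fun x => unitTrunc (u i x)) ^ r + ∑' i, X.nrmE (g i) ^ r :=
        add_le_add (hX.nrmE_iSup_rpow_le hr _) (hX.nrmE_iSup_rpow_le hr _)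
    _ ≤ ∑' i, (X.nrm (u i) ^ r + X.nrmE (g i) ^ r) := by
        rw [ENNReal.tsum_add]
        gcongr
        exact X.nrmE_unitTrunc_le _
    _ ≤ ∑' i, (X.capR r (E i) ^ r + e i) := ENNReal.tsum_le_tsum fun i => (hug i).le
    _ ≤ ∑' i, X.capR r (E i) ^ r + ε := by
        rw [ENNReal.tsum_add]
        gcongr

/-- The set function `C̃_{X,r}(·)^r` is countably subadditive. -/
theorem capR_rpow_countably_subadditive
    {P : Type*} [MetricSpace P] [MeasurableSpace P] [BorelSpace P]
    (μ : MeasureTheory.Measure P) [SigmaFinite μ]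
    (hball : ∀ (x : P) (r : ℝ), 0 < r → 0 < μ (Metric.ball x r) ∧ μ (Metric.ball x r) < ⊤)
    (X : QBFL P μ) (r : ℝ) (hr0 : 0 < r) (hr1 : r ≤ 1) (hrn : X.IsRNorm r)
    (E : ℕ → Set P) :
    X.capR r (⋃ j, E j) ^ r ≤ ∑' j, X.capR r (E j) ^ r :=
  capR_rpow_countably_subadditive_general X hr0 hrn E

end
end

section
/- Suppose that u and v are both quasi-continuous functions on P. If u = v μ-almost everywhere, then u = v quasi-everywhere, i.e., C_X({x ∈ P : u(x) ≠ v(x)}) = 0. -/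
/-!
A quasi-continuous `f` that avoids an open set `O` almost everywhere avoids it quasi-everywhere;
apply this to `f = (u, v)` and the complement of the diagonal. Let `U` be an open set of small
capacity off which `f` is continuous. Then `U ∪ f⁻¹ O` is open, and it exceeds `U` by a null set
only, so everything rests on the fact that removing a null set `N` from an open set `G` does not
change its capacity.

For this, let `w ≥ 1` on `G \ N` and let `g` be an upper gradient of `w`. Enlarge `g` to `∞` on `N`,
which costs nothing in norm. A curve along which the new gradient has finite integral spends almost
no time in `N`, and `w` is continuous along it at its end points; so if the curve starts or ends in
`G`, then `w ≥ 1` there, even if that end point lies in `N`. Raising `w` to at least `1` on all of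
`G` is therefore invisible to such curves, and the new gradient is an upper gradient of the raised
function.
-/

open MeasureTheory Filter Set Topology Metric ENNReal

noncomputable section

variable {P : Type*}

variable [MetricSpace P] [MeasurableSpace P] {μ : MeasureTheory.Measure P}

/-- `u` is weakly quasi-continuous: for every `ε > 0` there is a set `E` of capacity
less than `ε` such that the restriction of `u` to the complement of `E` is finite
and continuous. -/
def QBFL.WeaklyQC (X : QBFL P μ) (u : P → EReal) : Prop :=
  ∀ ε : ℝ≥0∞, 0 < ε → ∃ E : Set P, X.cap E < ε ∧
    (∀ x ∈ Eᶜ, u x ≠ ⊤ ∧ u x ≠ ⊥) ∧ ContinuousOn u Eᶜ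

/-- `u` is quasi-continuous: the exceptional set can moreover be chosen open. -/
def QBFL.QC (X : QBFL P μ) (u : P → EReal) : Prop :=
  ∀ ε : ℝ≥0∞, 0 < ε → ∃ E : Set P, IsOpen E ∧ X.cap E < ε ∧
    (∀ x ∈ Eᶜ, u x ≠ ⊤ ∧ u x ≠ ⊥) ∧ ContinuousOn u Eᶜ

lemma frequently_nhdsGT_of_ae_restrict_Ioo {α : Type*} [TopologicalSpace α] [LinearOrder α]
    [OrderTopology α] [DenselyOrdered α] [MeasurableSpace α] [OpensMeasurableSpace α]
    {ν : Measure α} [ν.IsOpenPosMeasure] {a b : α} (hab : a < b) {p : α → Prop}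
    (h : ∀ᵐ t ∂ν.restrict (Ioo a b), p t) : ∃ᶠ t in 𝓝[>] a, p t := by
  intro hnot
  obtain ⟨c, hac, hc⟩ := (mem_nhdsGT_iff_exists_mem_Ioc_Ioo_subset hab).1 hnot
  have hpos : 0 < ν (Ioo a c) := isOpen_Ioo.measure_pos ν (nonempty_Ioo.2 hac.1)
  have hac_ae : ∀ᵐ t ∂ν.restrict (Ioo a c), p t :=
    ae_restrict_of_ae_restrict_of_subset (Ioo_subset_Ioo_right hac.2) h
  have := ae_restrict_neBot.2 hpos.ne'
  obtain ⟨t, ht, htc⟩ := (hac_ae.and (ae_restrict_mem measurableSet_Ioo)).exists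
  exact hc htc ht

lemma isOpen_union_preimage_of_continuousOn_compl {α β : Type*} [TopologicalSpace α]
    [TopologicalSpace β] {f : α → β} {U : Set α} {O : Set β} (hU : IsOpen U)
    (hf : ContinuousOn f Uᶜ) (hO : IsOpen O) : IsOpen (U ∪ f ⁻¹' O) := by
  have hclosed := hf.preimage_isClosed_of_isClosed hU.isClosed_compl hO.isClosed_compl
  rwa [preimage_compl, ← compl_union, isClosed_compl_iff] at hclosed

/-! ### Extended reals -/

section ExtendedReals

lemma ereal_abs_coe_sub_coe (r s : ℝ) : ((r : EReal) - s).abs = edist r s := by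
  rw [← EReal.coe_sub, EReal.abs_def, edist_dist, Real.dist_eq]

lemma exists_coe_of_ereal_abs_sub_ne_top {a b : EReal} (h : (a - b).abs ≠ ⊤) :
    (∃ r : ℝ, r = a) ∧ ∃ s : ℝ, s = b := by
  induction a <;> induction b <;> simp_all [sub_eq_add_neg]

lemma ereal_abs_max_sub_max_le (a b a' b' : EReal) :
    (max a b - max a' b').abs ≤ (a - a').abs + (b - b').abs := by
  by_cases htop : (a - a').abs + (b - b').abs = ⊤
  · exact htop ▸ le_top
  obtain ⟨ha, hb⟩ := ENNReal.add_ne_top.1 htop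
  obtain ⟨⟨a, rfl⟩, a', rfl⟩ := exists_coe_of_ereal_abs_sub_ne_top ha
  obtain ⟨⟨b, rfl⟩, b', rfl⟩ := exists_coe_of_ereal_abs_sub_ne_top hb
  simp only [← EReal.coe_strictMono.monotone.map_max, ereal_abs_coe_sub_coe, edist_dist,
    Real.dist_eq]
  rw [← ENNReal.ofReal_add (abs_nonneg _) (abs_nonneg _)]
  exact ENNReal.ofReal_le_ofReal ((abs_max_sub_max_le_max a b a' b').trans
    (max_le_add_of_nonneg (abs_nonneg _) (abs_nonneg _)))

lemma tendsto_of_tendsto_ereal_abs_sub {ι : Type*} {l : Filter ι} {f : ι → EReal} {a : EReal}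
    (h : Tendsto (fun i => (a - f i).abs) l (𝓝 0)) : Tendsto f l (𝓝 a) := by
  obtain rfl | _ := l.eq_or_neBot
  · exact tendsto_bot
  have hreal : ∀ᶠ i in l, (∃ r : ℝ, r = a) ∧ ∃ s : ℝ, s = f i :=
    (h.eventually_lt_const ENNReal.zero_lt_top).mono fun i hi =>
      exists_coe_of_ereal_abs_sub_ne_top hi.ne
  obtain ⟨-, ⟨r, rfl⟩, -⟩ := hreal.exists
  have hf : (fun i => ((f i).toReal : EReal)) =ᶠ[l] f := by
    filter_upwards [hreal] with i ⟨_, s, hs⟩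
    rw [← hs, EReal.toReal_coe]
  refine Tendsto.congr' hf (EReal.tendsto_coe.2 (tendsto_iff_edist_tendsto_0.2 ?_))
  refine h.congr' ?_
  filter_upwards [hreal] with i ⟨_, s, hs⟩
  rw [← hs, ereal_abs_coe_sub_coe, EReal.toReal_coe, edist_comm]

end ExtendedReals

/-! ### Curves and upper gradients -/

section UpperGradients

variable {Q : Type*} [PseudoMetricSpace Q]

namespace Curve

/-- The initial piece `γ|_[0,s]` of a curve, through which an upper gradient controls `u ∘ γ` near
the starting point. -/
def initial (γ : Curve Q) (s : ℝ) (hs : s ∈ Ioc 0 γ.len) : Curve Q where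
  len := s
  len_pos := hs.1
  toFun := γ.toFun
  lip := γ.lip.mono (Icc_subset_Icc_right hs.2)

/-- The curve traversed backwards, which exchanges the roles of the two end points. -/
def reverse (γ : Curve Q) : Curve Q where
  len := γ.len
  len_pos := γ.len_pos
  toFun t := γ.toFun (γ.len - t)
  lip := by
    have hmaps : MapsTo (fun t => γ.len - t) (Icc 0 γ.len) (Icc 0 γ.len) := fun t ht =>
      ⟨sub_nonneg.2 ht.2, sub_le_self _ ht.1⟩
    intro s hs t ht
    simpa only [edist_sub_left] using γ.lip (hmaps hs) (hmaps ht)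

lemma tendsto_nhdsGT_zero (γ : Curve Q) : Tendsto γ.toFun (𝓝[>] 0) (𝓝 (γ.toFun 0)) := by
  rw [← nhdsWithin_Ioc_eq_nhdsGT γ.len_pos]
  exact (γ.lip.continuousOn 0 (left_mem_Icc.2 γ.len_pos.le)).mono_left
    (nhdsWithin_mono 0 Ioc_subset_Icc_self)

lemma aemeasurable_comp [MeasurableSpace Q] [BorelSpace Q] (γ : Curve Q) {g : Q → ℝ≥0∞}
    (hg : Measurable g) :
    AEMeasurable (fun t => g (γ.toFun t)) (volume.restrict (Icc 0 γ.len)) :=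
  hg.comp_aemeasurable (γ.lip.continuousOn.aemeasurable measurableSet_Icc)

end Curve

lemma curveLint_mono (γ : Curve Q) {g g' : Q → ℝ≥0∞} (h : g ≤ g') :
    curveLint γ g ≤ curveLint γ g' :=
  lintegral_mono fun t => h (γ.toFun t)

lemma curveLint_reverse (γ : Curve Q) (g : Q → ℝ≥0∞) :
    curveLint γ.reverse g = curveLint γ g := by
  have hpre : (fun t => γ.len - t) ⁻¹' Icc 0 γ.len = Icc 0 γ.len := by
    rw [preimage_const_sub_Icc, sub_self, sub_zero]
  have hsub := (Measure.measurePreserving_sub_left volume γ.len).setLIntegral_comp_preimage_emb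
    (MeasurableEquiv.subLeft γ.len).measurableEmbedding (fun t => g (γ.toFun t)) (Icc 0 γ.len)
  rwa [hpre] at hsub

lemma tendsto_setLIntegral_Icc_nhdsGT_zero {γ : Curve Q} {g : Q → ℝ≥0∞}
    (hfin : curveLint γ g ≠ ⊤) :
    Tendsto (fun t => ∫⁻ s in Icc 0 t, g (γ.toFun s)) (𝓝[>] 0) (𝓝 0) := by
  have hvol : Tendsto (fun t : ℝ => volume (Icc 0 t)) (𝓝[>] 0) (𝓝 0) := by
    simpa only [Real.volume_Icc, sub_zero, ENNReal.ofReal_zero, id_eq] using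
      (ENNReal.tendsto_ofReal (tendsto_id (α := ℝ) (x := 𝓝 0))).mono_left nhdsWithin_le_nhds
  have hvol_restrict : Tendsto (volume.restrict (Icc 0 γ.len) ∘ Icc 0) (𝓝[>] 0) (𝓝 0) :=
    tendsto_of_tendsto_of_tendsto_of_le_of_le tendsto_const_nhds hvol (fun _ => zero_le)
      fun _ => Measure.restrict_apply_le _ _
  refine (tendsto_setLIntegral_zero hfin hvol_restrict).congr' ?_
  filter_upwards [Ioc_mem_nhdsGT γ.len_pos] with t ht
  rw [Measure.restrict_restrict_of_subset (Icc_subset_Icc_right ht.2)]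

variable [MeasurableSpace Q]

lemma ae_notMem_of_curveLint_indicator_top_ne_top [BorelSpace Q] {γ : Curve Q} {N : Set Q}
    (hN : MeasurableSet N) (hfin : curveLint γ (N.indicator ⊤) ≠ ⊤) :
    ∀ᵐ t ∂volume.restrict (Icc 0 γ.len), γ.toFun t ∉ N := by
  have hmeas : Measurable (N.indicator (⊤ : Q → ℝ≥0∞)) := measurable_const.indicator hN
  filter_upwards [ae_lt_top' (γ.aemeasurable_comp hmeas) hfin] with t ht htN
  simp [indicator_of_mem htN] at ht

namespace IsUpperGradient

variable {u v : Q → EReal} {g h : Q → ℝ≥0∞}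

lemma tendsto_nhdsGT_zero (hg : IsUpperGradient u g) {γ : Curve Q} (hfin : curveLint γ g ≠ ⊤) :
    Tendsto (fun t => u (γ.toFun t)) (𝓝[>] 0) (𝓝 (u (γ.toFun 0))) := by
  refine tendsto_of_tendsto_ereal_abs_sub (tendsto_of_tendsto_of_tendsto_of_le_of_le'
    tendsto_const_nhds (tendsto_setLIntegral_Icc_nhdsGT_zero hfin)
    (Eventually.of_forall fun _ => zero_le) ?_)
  filter_upwards [Ioc_mem_nhdsGT γ.len_pos] with t ht
  exact hg.2 (γ.initial t ht)

protected lemma max [BorelSpace Q] (hg : IsUpperGradient u g) (hh : IsUpperGradient v h) :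
    IsUpperGradient (u ⊔ v) (g + h) := by
  refine ⟨hg.1.add hh.1, fun γ => ?_⟩
  calc (max (u (γ.toFun 0)) (v (γ.toFun 0)) - max (u (γ.toFun γ.len)) (v (γ.toFun γ.len))).abs
      ≤ (u (γ.toFun 0) - u (γ.toFun γ.len)).abs + (v (γ.toFun 0) - v (γ.toFun γ.len)).abs :=
        ereal_abs_max_sub_max_le _ _ _ _
    _ ≤ curveLint γ g + curveLint γ h := add_le_add (hg.2 γ) (hh.2 γ)
    _ = curveLint γ (g + h) := (lintegral_add_left' (γ.aemeasurable_comp hg.1) _).symm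

/-- Reversal of curves makes it enough to compare `v` with `u` at starting points. -/
lemma congr_start (hg : IsUpperGradient u g) (hh : Measurable h) (hgh : g ≤ h)
    (huv : ∀ γ : Curve Q, curveLint γ h ≠ ⊤ → v (γ.toFun 0) = u (γ.toFun 0)) :
    IsUpperGradient v h := by
  refine ⟨hh, fun γ => ?_⟩
  by_cases hfin : curveLint γ h = ⊤
  · exact hfin ▸ le_top
  have hend : v (γ.toFun γ.len) = u (γ.toFun γ.len) := by
    simpa only [Curve.reverse, sub_zero] using huv γ.reverse (by rwa [curveLint_reverse])
  rw [huv γ hfin, hend]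
  exact (hg.2 γ).trans (curveLint_mono γ hgh)

lemma le_start_of_le_on_diff [BorelSpace Q] (hg : IsUpperGradient u g) {γ : Curve Q}
    {G N : Set Q} {c : EReal} (hG : IsOpen G) (hN : MeasurableSet N) (hc : ∀ x ∈ G \ N, c ≤ u x)
    (hfin : curveLint γ (g + N.indicator ⊤) ≠ ⊤) (hstart : γ.toFun 0 ∈ G) :
    c ≤ u (γ.toFun 0) := by
  have hg_fin : curveLint γ g ≠ ⊤ :=
    ne_top_of_le_ne_top hfin (curveLint_mono γ le_self_add)
  have hN_fin : curveLint γ (N.indicator ⊤) ≠ ⊤ :=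
    ne_top_of_le_ne_top hfin (curveLint_mono γ le_add_self)
  have hGev : ∀ᶠ t in 𝓝[>] 0, γ.toFun t ∈ G :=
    γ.tendsto_nhdsGT_zero.eventually (hG.mem_nhds hstart)
  have hNfreq : ∃ᶠ t in 𝓝[>] 0, γ.toFun t ∉ N :=
    frequently_nhdsGT_of_ae_restrict_Ioo γ.len_pos (ae_restrict_of_ae_restrict_of_subset
      Ioo_subset_Icc_self (ae_notMem_of_curveLint_indicator_top_ne_top hN hN_fin))
  exact ge_of_tendsto_of_frequently (hg.tendsto_nhdsGT_zero hg_fin)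
    ((hNfreq.and_eventually hGev).mono fun t ht => hc _ ⟨ht.2, ht.1⟩)

end IsUpperGradient

end UpperGradients

section RaiseOn

variable {α : Type*} {G N : Set α} {c : EReal} {u : α → EReal}

open Classical in
/-- The function `u` raised to at least `c` on `G` and left unchanged elsewhere. It turns a
function that is admissible for the capacity of `G` up to a null set into an admissible one. -/
def raiseOn (G : Set α) (c : EReal) (u : α → EReal) : α → EReal :=
  G.piecewise (fun x => max (u x) c) u

lemma le_raiseOn {x : α} (hx : x ∈ G) : c ≤ raiseOn G c u x := by
  classical
  rw [raiseOn, piecewise_eq_of_mem _ _ _ hx]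
  exact le_max_right _ _

lemma raiseOn_eq_self {x : α} (h : x ∈ G → c ≤ u x) : raiseOn G c u x = u x := by
  classical
  by_cases hx : x ∈ G
  · rw [raiseOn, piecewise_eq_of_mem _ _ _ hx, max_eq_left (h hx)]
  · rw [raiseOn, piecewise_eq_of_notMem _ _ _ hx]

lemma measurable_raiseOn [MeasurableSpace α] (hG : MeasurableSet G) (hu : Measurable u) :
    Measurable (raiseOn G c u) := by
  classical exact (hu.max measurable_const).piecewise hG hu

lemma IsUpperGradient.raiseOn [PseudoMetricSpace α] [MeasurableSpace α] [BorelSpace α]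
    {g : α → ℝ≥0∞} (hg : IsUpperGradient u g) (hG : IsOpen G) (hN : MeasurableSet N)
    (hc : ∀ x ∈ G \ N, c ≤ u x) :
    IsUpperGradient (raiseOn G c u) (g + N.indicator ⊤) :=
  hg.congr_start (hg.1.add (measurable_const.indicator hN)) le_self_add fun _ hfin =>
    raiseOn_eq_self fun hstart => hg.le_start_of_le_on_diff hG hN hc hfin hstart

end RaiseOn

/-! ### Newtonian norm and capacity -/

namespace QBFL

section Lattice

variable {α : Type*} [MeasurableSpace α] {ν : Measure α} (X : QBFL α ν)

lemma nrm_max_le (u v : α → EReal) : X.nrm (u ⊔ v) ≤ X.cc * (X.nrm u + X.nrm v) := by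
  have habs (w : α → EReal) : X.nrm (fun x => ((w x).abs : EReal)) ≤ X.nrm w :=
    X.nrm_mono _ _ (Eventually.of_forall fun x => (ereal_abs_coe_ennreal _).le)
  calc X.nrm (u ⊔ v)
      ≤ X.nrm (fun x => ((u x).abs : EReal) + ((v x).abs : EReal)) := by
        refine X.nrm_mono _ _ (Eventually.of_forall fun x => ?_)
        rw [← EReal.coe_ennreal_add, ereal_abs_coe_ennreal, Pi.sup_apply]
        obtain h | h := max_choice (u x) (v x) <;> rw [h]
        · exact le_self_add
        · exact le_add_self
    _ ≤ X.cc * (X.nrm (fun x => ((u x).abs : EReal)) + X.nrm (fun x => ((v x).abs : EReal))) :=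
        X.nrm_triangle _ _
    _ ≤ X.cc * (X.nrm u + X.nrm v) := by gcongr <;> exact habs _

lemma nrm_raiseOn_le {G N : Set α} {c : EReal} {u : α → EReal} (hN : ν N = 0)
    (hc : ∀ x ∈ G \ N, c ≤ u x) : X.nrm (raiseOn G c u) ≤ X.nrm u := by
  refine X.nrm_mono _ _ ?_
  filter_upwards [measure_eq_zero_iff_ae_notMem.1 hN] with x hx
  rw [raiseOn_eq_self fun hxG => hc x ⟨hxG, hx⟩]

lemma nrmE_add_le (g h : α → ℝ≥0∞) : X.nrmE (g + h) ≤ X.cc * (X.nrmE g + X.nrmE h) := by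
  simpa only [nrmE, Pi.add_apply, EReal.coe_ennreal_add] using
    X.nrm_triangle (fun x => (g x : EReal)) (fun x => (h x : EReal))

lemma nrmE_add_indicator_top_le (g : α → ℝ≥0∞) {N : Set α} (hN : ν N = 0) :
    X.nrmE (g + N.indicator ⊤) ≤ X.nrmE g := by
  refine X.nrm_mono _ _ ?_
  filter_upwards [measure_eq_zero_iff_ae_notMem.1 hN] with x hx
  rw [Pi.add_apply, indicator_of_notMem hx, add_zero]

lemma le_cc_mul_of_div_le {a b : ℝ≥0∞} (h : a / X.cc ≤ b) : a ≤ X.cc * b :=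
  (ENNReal.div_le_iff' (one_pos.trans_le X.one_le_cc).ne' X.cc_lt_top.ne).1 h

end Lattice

variable (X : QBFL P μ)

/-- The gradient part `inf ‖g‖_X` of the Newtonian quasi-seminorm, the infimum being taken over
all upper gradients `g` of `u`. -/
def gradNrm (u : P → EReal) : ℝ≥0∞ :=
  ⨅ g ∈ {g : P → ℝ≥0∞ | IsUpperGradient u g}, X.nrmE g

lemma newt_eq_nrm_add_gradNrm (u : P → EReal) : X.newt u = X.nrm u + X.gradNrm u := rfl

/-- Functions `u : P → Y` with values in a topological space `Y` that are continuous off open sets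
of arbitrarily small capacity. In contrast to `QBFL.QC`, which is the case of finite extended-real
values, a pair of such functions is again one. -/
def QuasiContinuous {Y : Type*} [TopologicalSpace Y] (f : P → Y) : Prop :=
  ∀ ε : ℝ≥0∞, 0 < ε → ∃ U : Set P, IsOpen U ∧ X.cap U < ε ∧ ContinuousOn f Uᶜ

lemma cap_le_newt {E : Set P} {u : P → EReal} (hu : Measurable u) (hE : ∀ x ∈ E, 1 ≤ u x) :
    X.cap E ≤ X.newt u := by
  obtain hfin | htop := lt_or_ge (X.newt u) ⊤
  · exact iInf₂_le u ⟨⟨hu, hfin⟩, hE⟩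
  · exact le_top.trans htop

lemma cap_mono {E F : Set P} (hEF : E ⊆ F) : X.cap E ≤ X.cap F :=
  le_iInf₂ fun _ hu => X.cap_le_newt hu.1.1 fun x hx => hu.2 x (hEF hx)

variable {X}

lemma QC.quasiContinuous {u : P → EReal} (hu : X.QC u) : X.QuasiContinuous u := fun ε hε =>
  let ⟨U, hU, hcap, _, hcont⟩ := hu ε hε
  ⟨U, hU, hcap, hcont⟩

variable (X) [BorelSpace P]

lemma gradNrm_max_le (u v : P → EReal) :
    X.gradNrm (u ⊔ v) ≤ X.cc * (X.gradNrm u + X.gradNrm v) := by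
  refine X.le_cc_mul_of_div_le (ENNReal.le_iInf₂_add_iInf₂ fun g hg h hh => ?_)
  exact ENNReal.div_le_of_le_mul' ((iInf₂_le _ (IsUpperGradient.max hg hh)).trans
    (X.nrmE_add_le g h))

lemma newt_max_le (u v : P → EReal) : X.newt (u ⊔ v) ≤ X.cc * (X.newt u + X.newt v) := by
  simp only [newt_eq_nrm_add_gradNrm]
  calc X.nrm (u ⊔ v) + X.gradNrm (u ⊔ v)
      ≤ X.cc * (X.nrm u + X.nrm v) + X.cc * (X.gradNrm u + X.gradNrm v) :=
        add_le_add (X.nrm_max_le u v) (X.gradNrm_max_le u v)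
    _ = X.cc * (X.nrm u + X.gradNrm u + (X.nrm v + X.gradNrm v)) := by ring

lemma cap_union_le (E F : Set P) : X.cap (E ∪ F) ≤ X.cc * (X.cap E + X.cap F) := by
  refine X.le_cc_mul_of_div_le (ENNReal.le_iInf₂_add_iInf₂ fun u hu v hv => ?_)
  refine ENNReal.div_le_of_le_mul' ((X.cap_le_newt (hu.1.1.max hv.1.1) ?_).trans
    (X.newt_max_le u v))
  rintro x (hx | hx)
  · exact le_max_of_le_left (hu.2 x hx)
  · exact le_max_of_le_right (hv.2 x hx)

section Null

variable {G N : Set P} {c : EReal} {u : P → EReal}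

lemma gradNrm_raiseOn_le (hG : IsOpen G) (hN : μ N = 0) (hc : ∀ x ∈ G \ N, c ≤ u x) :
    X.gradNrm (raiseOn G c u) ≤ X.gradNrm u := by
  refine le_iInf₂ fun g hg => ?_
  have hc' : ∀ x ∈ G \ toMeasurable μ N, c ≤ u x := fun x hx =>
    hc x (sdiff_subset_sdiff_right (subset_toMeasurable μ N) hx)
  exact (iInf₂_le _ (IsUpperGradient.raiseOn hg hG (measurableSet_toMeasurable μ N) hc')).trans
    (X.nrmE_add_indicator_top_le g ((measure_toMeasurable N).trans hN))

lemma newt_raiseOn_le (hG : IsOpen G) (hN : μ N = 0) (hc : ∀ x ∈ G \ N, c ≤ u x) :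
    X.newt (raiseOn G c u) ≤ X.newt u :=
  add_le_add (X.nrm_raiseOn_le hN hc) (X.gradNrm_raiseOn_le hG hN hc)

lemma cap_diff_null (hG : IsOpen G) (hN : μ N = 0) : X.cap (G \ N) = X.cap G := by
  refine le_antisymm (X.cap_mono sdiff_subset) (le_iInf₂ fun u hu => ?_)
  calc X.cap G ≤ X.newt (raiseOn G 1 u) :=
        X.cap_le_newt (measurable_raiseOn hG.measurableSet hu.1.1) fun _ => le_raiseOn
    _ ≤ X.newt u := X.newt_raiseOn_le hG hN hu.2

end Null

namespace QuasiContinuous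

variable {X} {Y Z : Type*} [TopologicalSpace Y] [TopologicalSpace Z]

lemma prodMk {f : P → Y} {g : P → Z} (hf : X.QuasiContinuous f) (hg : X.QuasiContinuous g) :
    X.QuasiContinuous fun x => (f x, g x) := by
  intro ε hε
  have hδ : 0 < ε / X.cc / 2 := ENNReal.half_pos (ENNReal.div_pos hε.ne' X.cc_lt_top.ne).ne'
  obtain ⟨U, hU, hU_cap, hfU⟩ := hf _ hδ
  obtain ⟨V, hV, hV_cap, hgV⟩ := hg _ hδ
  refine ⟨U ∪ V, hU.union hV, ?_, (hfU.mono (compl_subset_compl.2 subset_union_left)).prodMk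
    (hgV.mono (compl_subset_compl.2 subset_union_right))⟩
  have hsum : X.cap U + X.cap V < ε / X.cc :=
    (ENNReal.add_lt_add hU_cap hV_cap).trans_eq (ENNReal.add_halves _)
  exact (X.cap_union_le U V).trans_lt (ENNReal.mul_lt_of_lt_div' hsum)

lemma cap_preimage_eq_zero {f : P → Y} (hf : X.QuasiContinuous f) {O : Set Y} (hO : IsOpen O)
    (hnull : μ (f ⁻¹' O) = 0) : X.cap (f ⁻¹' O) = 0 := by
  refine nonpos_iff_eq_zero.1 (le_of_forall_gt fun ε hε => ?_)
  obtain ⟨U, hU, hU_cap, hfU⟩ := hf ε hε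
  have hopen : IsOpen (U ∪ f ⁻¹' O) := isOpen_union_preimage_of_continuousOn_compl hU hfU hO
  calc X.cap (f ⁻¹' O) ≤ X.cap (U ∪ f ⁻¹' O) := X.cap_mono subset_union_right
    _ = X.cap ((U ∪ f ⁻¹' O) \ f ⁻¹' O) := (X.cap_diff_null hopen hnull).symm
    _ ≤ X.cap U := X.cap_mono (by rw [union_sdiff_right]; exact sdiff_subset)
    _ < ε := hU_cap

end QuasiContinuous

end QBFL

theorem qc_ae_eq_implies_qe_eq_general
    {P : Type*} [MetricSpace P] [MeasurableSpace P] [BorelSpace P]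
    {μ : MeasureTheory.Measure P} {X : QBFL P μ} {Y : Type*} [TopologicalSpace Y] [T2Space Y]
    {u v : P → Y} (hu : X.QuasiContinuous u) (hv : X.QuasiContinuous v) (hae : u =ᵐ[μ] v) :
    X.cap {x | u x ≠ v x} = 0 :=
  (hu.prodMk hv).cap_preimage_eq_zero isClosed_diagonal.isOpen_compl hae

/-- Two quasi-continuous functions that agree almost everywhere agree
quasi-everywhere. -/
theorem qc_ae_eq_implies_qe_eq
    {P : Type*} [MetricSpace P] [MeasurableSpace P] [BorelSpace P]
    (μ : MeasureTheory.Measure P) [SigmaFinite μ]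
    (hball : ∀ (x : P) (r : ℝ), 0 < r → 0 < μ (Metric.ball x r) ∧ μ (Metric.ball x r) < ⊤)
    (X : QBFL P μ)
    (u v : P → EReal) (hu : X.QC u) (hv : X.QC v) (hae : u =ᵐ[μ] v) :
    X.cap {x | u x ≠ v x} = 0 :=
  qc_ae_eq_implies_qe_eq_general hu.quasiContinuous hv.quasiContinuous hae

end
end

section
/- Suppose that P = ⋃_{k=1}^∞ P_k, where each P_k is open, and that for every k ∈ ℕ there is δ_k > 0 such that C_X({x}) ≥ δ_k for each x ∈ P_k. Then every weakly quasi-continuous function on P is (everywhere finite and) continuous. In particular, if all functions in N¹X are weakly quasi-continuous, then N¹X ⊆ C(P). -/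
/-!
By monotonicity of the capacity, a set of capacity less than `δ` contains no point `x` with
`C_X({x}) ≥ δ`. The exceptional set which weak quasi-continuity provides for `ε = δ` therefore
misses `{x | C_X({x}) ≥ δ}` altogether, and the function is finite and continuous there. Continuity
at a point follows as soon as such a set is a neighbourhood of it.
-/

open MeasureTheory Filter Set Topology Metric ENNReal

noncomputable section

variable {P : Type*}

variable [MetricSpace P] [MeasurableSpace P] {μ : MeasureTheory.Measure P}

theorem QBFL.cap_mono_s9 (X : QBFL P μ) {E F : Set P} (h : E ⊆ F) : X.cap E ≤ X.cap F :=
  biInf_mono fun _ hu => ⟨hu.1, fun x hx => hu.2 x (h hx)⟩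

theorem QBFL.notMem_of_cap_lt_cap_singleton (X : QBFL P μ) {E : Set P} {x : P}
    (h : X.cap E < X.cap {x}) : x ∉ E :=
  fun hx => (X.cap_mono_s9 (singleton_subset_iff.2 hx)).not_gt h

namespace QBFL.WeaklyQC

variable {X : QBFL P μ} {u : P → EReal}

theorem ne_top_and_ne_bot (hu : X.WeaklyQC u) {x : P} (hx : 0 < X.cap {x}) :
    u x ≠ ⊤ ∧ u x ≠ ⊥ := by
  obtain ⟨E, hE, hfinite, -⟩ := hu (X.cap {x}) hx
  exact hfinite x (X.notMem_of_cap_lt_cap_singleton hE)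

theorem continuousOn_setOf_le_cap_singleton (hu : X.WeaklyQC u) {δ : ℝ≥0∞} (hδ : 0 < δ) :
    ContinuousOn u {x | δ ≤ X.cap {x}} := by
  obtain ⟨E, hE, -, hcont⟩ := hu δ hδ
  exact hcont.mono fun x hx => X.notMem_of_cap_lt_cap_singleton (hE.trans_le hx)

end QBFL.WeaklyQC

theorem wqc_continuous_of_singleton_cap_general (X : QBFL P μ)
    (hcap : ∀ x, ∃ δ > 0, ∀ᶠ y in 𝓝 x, δ ≤ X.cap {y}) :
    (∀ u : P → EReal, X.WeaklyQC u → (∀ x, u x ≠ ⊤ ∧ u x ≠ ⊥) ∧ Continuous u) ∧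
      ((∀ u : P → EReal, X.memN1 u → X.WeaklyQC u) →
        ∀ u : P → EReal, X.memN1 u → Continuous u) := by
  have hcont : ∀ u : P → EReal, X.WeaklyQC u → (∀ x, u x ≠ ⊤ ∧ u x ≠ ⊥) ∧ Continuous u := by
    refine fun u hu => ⟨fun x => ?_, continuous_iff_continuousAt.2 fun x => ?_⟩
    · obtain ⟨δ, hδ, hx⟩ := hcap x
      exact hu.ne_top_and_ne_bot (hδ.trans_le hx.self_of_nhds)
    · obtain ⟨δ, hδ, hx⟩ := hcap x
      exact (hu.continuousOn_setOf_le_cap_singleton hδ).continuousAt hx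
  exact ⟨hcont, fun hwqc u hu => (hcont u (hwqc u hu)).2⟩

/-- If `P` is covered by countably many open sets on each of which the
capacity of singletons is bounded below by a positive constant, then weakly quasi-continuous
functions are (finite and) continuous; in particular if all functions in `N¹X` are weakly
quasi-continuous, then `N¹X ⊆ C(P)`. -/
theorem wqc_continuous_of_singleton_cap
    {P : Type*} [MetricSpace P] [MeasurableSpace P] [BorelSpace P]
    (μ : MeasureTheory.Measure P) [SigmaFinite μ]
    (hball : ∀ (x : P) (r : ℝ), 0 < r → 0 < μ (Metric.ball x r) ∧ μ (Metric.ball x r) < ⊤)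
    (X : QBFL P μ)
    (Pk : ℕ → Set P) (hPkopen : ∀ k, IsOpen (Pk k)) (hcover : (⋃ k, Pk k) = Set.univ)
    (δ : ℕ → ℝ≥0∞) (hδ : ∀ k, 0 < δ k)
    (hcap : ∀ k, ∀ x ∈ Pk k, δ k ≤ X.cap {x}) :
    (∀ u : P → EReal, X.WeaklyQC u → (∀ x, u x ≠ ⊤ ∧ u x ≠ ⊥) ∧ Continuous u) ∧
      ((∀ u : P → EReal, X.memN1 u → X.WeaklyQC u) →
        ∀ u : P → EReal, X.memN1 u → Continuous u) := by
  exact wqc_continuous_of_singleton_cap_general X fun x => (iUnion_eq_univ_iff.1 hcover x).imp' δ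
    fun k hk => ⟨hδ k, ((hPkopen k).eventually_mem hk).mono (hcap k)⟩

end
end
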